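/- arXiv:0706.4411 — 2 statements merged into one kernel-verified Lean document; each statement's English description precedes it below -/
import Mathlib

section
/- Let H be a complex separable Hilbert space, (e_j)_{j≥1} an orthonormal basis, (λ_j)_{j≥1} a nondecreasing sequence of positive reals, L(t) a family of symmetric operators from H¹(Γ) to H, and ε > 0. Suppose φ : [0,∞) → H is continuous and for every t > 0, φ(t) ∈ H²(Γ) and φ has derivative i·L(t)φ(t) − ε·Γφ(t) at t. Then for every T > 0, 2ε ∫₀^T ‖φ(t)‖₁² dt ≤ ‖φ(0)‖². -/
open scoped InnerProductSpace ENNReal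
open MeasureTheory

/-- The (squared) homogeneous `H¹(Γ)` norm: `‖ψ‖₁² = Σ_j λ_j |⟨e_j, ψ⟩|² ∈ [0,∞]`. -/
noncomputable def H1normSq {H : Type*} [NormedAddCommGroup H] [InnerProductSpace ℂ H]
    (e : ℕ → H) (lam : ℕ → ℝ) (ψ : H) : ℝ≥0∞ :=
  ∑' j, ENNReal.ofReal (lam j * ‖⟪e j, ψ⟫_ℂ‖ ^ 2)

/-- `ψ ∈ H¹(Γ)`. -/
def MemH1 {H : Type*} [NormedAddCommGroup H] [InnerProductSpace ℂ H]
    (e : ℕ → H) (lam : ℕ → ℝ) (ψ : H) : Prop :=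
  H1normSq e lam ψ ≠ ⊤

/-- `ψ ∈ H²(Γ)`, i.e. `Σ_j λ_j² |⟨e_j, ψ⟩|² < ∞`. -/
def MemH2 {H : Type*} [NormedAddCommGroup H] [InnerProductSpace ℂ H]
    (e : ℕ → H) (lam : ℕ → ℝ) (ψ : H) : Prop :=
  (∑' j, ENNReal.ofReal ((lam j) ^ 2 * ‖⟪e j, ψ⟫_ℂ‖ ^ 2)) ≠ ⊤

/-- `Γψ = Σ_j λ_j ⟨e_j, ψ⟩ e_j` (defined as a `tsum`; meaningful for `ψ ∈ H²(Γ)`). -/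
noncomputable def Gam {H : Type*} [NormedAddCommGroup H] [InnerProductSpace ℂ H]
    [CompleteSpace H] (e : ℕ → H) (lam : ℕ → ℝ) (ψ : H) : H :=
  ∑' j, ((lam j : ℂ) * ⟪e j, ψ⟫_ℂ) • e j

/-!
A symmetric `L t` contributes nothing to `d/dt ‖φ‖² = 2 Re ⟨φ, φ'⟩`, because `⟨φ, L φ⟩` is real,
while `Re ⟨φ, Γ φ⟩ = ‖φ‖₁²`. So `d/dt ‖φ‖² = -2ε ‖φ‖₁²`. A derivative of constant sign is
integrable, so the fundamental theorem of calculus gives the exact balance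
`‖φ(T)‖² + 2ε ∫₀^T ‖φ(t)‖₁² dt = ‖φ(0)‖²`.
-/

theorem ofReal_add_lintegral_ofReal_eq_of_hasDerivAt_neg {f g : ℝ → ℝ} {a b : ℝ} (hab : a ≤ b)
    (hf : ContinuousOn f (Set.Icc a b)) (hfb : 0 ≤ f b)
    (hderiv : ∀ t ∈ Set.Ioo a b, HasDerivAt f (-g t) t) (hg : ∀ t ∈ Set.Ioo a b, 0 ≤ g t) :
    ENNReal.ofReal (f b) + ∫⁻ t in Set.Ioo a b, ENNReal.ofReal (g t) = ENNReal.ofReal (f a) := by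
  have hderiv_neg : ∀ t ∈ Set.Ioo a b, HasDerivAt (fun s => -f s) (g t) t := fun t ht => by
    simpa using (hderiv t ht).fun_neg
  have hint : IntegrableOn g (Set.Ioc a b) :=
    intervalIntegral.integrableOn_deriv_of_nonneg hf.neg hderiv_neg hg
  have hftc : ∫ t in Set.Ioo a b, g t = f a - f b := by
    rw [← integral_Ioc_eq_integral_Ioo, ← intervalIntegral.integral_of_le hab,
      intervalIntegral.integral_eq_sub_of_hasDerivAt_of_le hab hf.neg hderiv_neg
        ((intervalIntegrable_iff_integrableOn_Ioc_of_le hab).2 hint)]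
    exact neg_sub_neg (f b) (f a)
  have hg_ae : 0 ≤ᵐ[volume.restrict (Set.Ioo a b)] g :=
    ae_restrict_of_forall_mem measurableSet_Ioo hg
  rw [← ofReal_integral_eq_lintegral_ofReal (hint.mono_set Set.Ioo_subset_Ioc_self) hg_ae,
    ← ENNReal.ofReal_add hfb (integral_nonneg_of_ae hg_ae), hftc, add_sub_cancel]

theorem summable_smul_of_orthonormal {ι 𝕜 E : Type*} [RCLike 𝕜] [NormedAddCommGroup E]
    [InnerProductSpace 𝕜 E] [CompleteSpace E] {e : ι → E} (he : Orthonormal 𝕜 e) {c : ι → 𝕜}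
    (hc : Summable fun i => ‖c i‖ ^ 2) : Summable fun i => c i • e i :=
  (he.orthogonalFamily.summable_iff_norm_sq_summable c).2 hc

section EnergyBalance

variable {H : Type*} [NormedAddCommGroup H] [InnerProductSpace ℂ H]

theorem re_inner_I_smul_sub_smul {x w : H} (hw : (⟪x, w⟫_ℂ).im = 0) (g : H) (ε : ℝ) :
    (⟪x, Complex.I • w - ε • g⟫_ℂ).re = -(ε * (⟪x, g⟫_ℂ).re) := by
  rw [← Complex.coe_smul ε g]
  simp [hw]

theorem hasDerivAt_norm_sq_of_im_inner_eq_zero {φ : ℝ → H} {w g : H} {ε t : ℝ}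
    (hw : (⟪φ t, w⟫_ℂ).im = 0) (hφ : HasDerivAt φ (Complex.I • w - ε • g) t) :
    HasDerivAt (fun s => ‖φ s‖ ^ 2) (-(2 * ε * (⟪φ t, g⟫_ℂ).re)) t := by
  let := InnerProductSpace.complexToReal (G := H)
  have hnorm : HasDerivAt (fun s => ‖φ s‖ ^ 2)
      (2 * (⟪φ t, Complex.I • w - ε • g⟫_ℂ).re) t := hφ.norm_sq
  rwa [re_inner_I_smul_sub_smul hw, mul_neg, ← mul_assoc] at hnorm

variable [CompleteSpace H] {e : ℕ → H} {lam : ℕ → ℝ} {ψ : H}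

theorem MemH2.hasSum_Gam (he : Orthonormal ℂ e) (h : MemH2 e lam ψ) :
    HasSum (fun j => ((lam j : ℂ) * ⟪e j, ψ⟫_ℂ) • e j) (Gam e lam ψ) := by
  have hsq : Summable fun j => lam j ^ 2 * ‖⟪e j, ψ⟫_ℂ‖ ^ 2 :=
    (ENNReal.summable_toReal h).congr fun j => ENNReal.toReal_ofReal (by positivity)
  refine (summable_smul_of_orthonormal he (hsq.congr fun j => ?_)).hasSum
  rw [norm_mul, mul_pow, Complex.norm_real, Real.norm_eq_abs, sq_abs]

theorem MemH2.hasSum_re_inner_Gam (he : Orthonormal ℂ e) (h : MemH2 e lam ψ) :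
    HasSum (fun j => lam j * ‖⟪e j, ψ⟫_ℂ‖ ^ 2) (⟪ψ, Gam e lam ψ⟫_ℂ).re := by
  refine (Complex.hasSum_re ((h.hasSum_Gam he).mapL (innerSL ℂ ψ))).congr_fun fun j => ?_
  rw [innerSL_apply_apply, inner_smul_right, mul_assoc, ← inner_conj_symm ψ (e j),
    Complex.mul_conj', ← Complex.ofReal_pow, ← Complex.ofReal_mul, Complex.ofReal_re]

theorem MemH2.memH1 (he : Orthonormal ℂ e) (h : MemH2 e lam ψ) : MemH1 e lam ψ :=
  (h.hasSum_re_inner_Gam he).summable.tsum_ofReal_ne_top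

theorem MemH2.re_inner_Gam_nonneg (he : Orthonormal ℂ e) (hlam : ∀ j, 0 ≤ lam j)
    (h : MemH2 e lam ψ) : 0 ≤ (⟪ψ, Gam e lam ψ⟫_ℂ).re :=
  (h.hasSum_re_inner_Gam he).nonneg fun j => mul_nonneg (hlam j) (sq_nonneg _)

theorem MemH2.H1normSq_eq_ofReal_re_inner_Gam (he : Orthonormal ℂ e) (hlam : ∀ j, 0 ≤ lam j)
    (h : MemH2 e lam ψ) : H1normSq e lam ψ = ENNReal.ofReal (⟪ψ, Gam e lam ψ⟫_ℂ).re := by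
  have hsum := h.hasSum_re_inner_Gam he
  rw [← hsum.tsum_eq, ENNReal.ofReal_tsum_of_nonneg
    (fun j => mul_nonneg (hlam j) (sq_nonneg _)) hsum.summable, H1normSq]

theorem statement2_general (he : Orthonormal ℂ e) (hlam : ∀ j, 0 ≤ lam j) {L : ℝ → H → H}
    (hL : ∀ t, 0 < t → ∀ x, MemH1 e lam x → ⟪L t x, x⟫_ℂ = ⟪x, L t x⟫_ℂ)
    {ε : ℝ} (hε : 0 ≤ ε) {φ : ℝ → H} (hφcont : ContinuousOn φ (Set.Ici 0))
    (hφH2 : ∀ t, 0 < t → MemH2 e lam (φ t))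
    (hφderiv : ∀ t, 0 < t → HasDerivAt φ (Complex.I • L t (φ t) - ε • Gam e lam (φ t)) t)
    {T : ℝ} (hT : 0 ≤ T) :
    ENNReal.ofReal (‖φ T‖ ^ 2) +
        2 * ENNReal.ofReal ε * ∫⁻ t in Set.Ioc 0 T, H1normSq e lam (φ t) =
      ENNReal.ofReal (‖φ 0‖ ^ 2) := by
  have henergy : ∀ t, 0 < t →
      HasDerivAt (fun s => ‖φ s‖ ^ 2) (-(2 * ε * (⟪φ t, Gam e lam (φ t)⟫_ℂ).re)) t := by
    intro t ht
    have hreal : (⟪φ t, L t (φ t)⟫_ℂ).im = 0 := by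
      rw [← Complex.conj_eq_iff_im, inner_conj_symm]
      exact hL t ht _ ((hφH2 t ht).memH1 he)
    exact hasDerivAt_norm_sq_of_im_inner_eq_zero hreal (hφderiv t ht)
  have hdissipation : 2 * ENNReal.ofReal ε * ∫⁻ t in Set.Ioc 0 T, H1normSq e lam (φ t) =
      ∫⁻ t in Set.Ioo 0 T, ENNReal.ofReal (2 * ε * (⟪φ t, Gam e lam (φ t)⟫_ℂ).re) := by
    rw [← ENNReal.ofReal_ofNat 2, ← ENNReal.ofReal_mul zero_le_two,
      ← setLIntegral_congr Ioo_ae_eq_Ioc, ← lintegral_const_mul' _ _ ENNReal.ofReal_ne_top]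
    refine setLIntegral_congr_fun measurableSet_Ioo fun t ht => ?_
    rw [(hφH2 t ht.1).H1normSq_eq_ofReal_re_inner_Gam he hlam,
      ENNReal.ofReal_mul (p := 2 * ε) (by positivity)]
  rw [hdissipation]
  exact ofReal_add_lintegral_ofReal_eq_of_hasDerivAt_neg hT
    ((hφcont.mono Set.Icc_subset_Ici_self).norm.pow 2) (sq_nonneg _)
    (fun t ht => henergy t ht.1)
    fun t ht => mul_nonneg (by positivity) ((hφH2 t ht.1).re_inner_Gam_nonneg he hlam)

end EnergyBalance

/-- the energy inequality `2ε ∫₀^T ‖φ(t)‖₁² dt ≤ ‖φ(0)‖²`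
(stated with the lower Lebesgue integral of the extended-real valued `‖φ(t)‖₁²`). -/
theorem statement2 {H : Type*} [NormedAddCommGroup H] [InnerProductSpace ℂ H]
    [CompleteSpace H] [TopologicalSpace.SeparableSpace H]
    (e : HilbertBasis ℕ ℂ H) (lam : ℕ → ℝ)
    (hlam_pos : ∀ j, 0 < lam j) (hlam_mono : Monotone lam)
    (L : ℝ → H →ₗ[ℂ] H)
    (hLsym : ∀ t : ℝ, ∀ x y : H, MemH1 (⇑e) lam x → MemH1 (⇑e) lam y →
      ⟪L t x, y⟫_ℂ = ⟪x, L t y⟫_ℂ)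
    (ε : ℝ) (hε : 0 < ε) (φ : ℝ → H)
    (hφcont : ContinuousOn φ (Set.Ici (0 : ℝ)))
    (hφH2 : ∀ t : ℝ, 0 < t → MemH2 (⇑e) lam (φ t))
    (hφderiv : ∀ t : ℝ, 0 < t →
      HasDerivAt φ (Complex.I • L t (φ t) - ε • Gam (⇑e) lam (φ t)) t) :
    ∀ T : ℝ, 0 < T →
      2 * ENNReal.ofReal ε * ∫⁻ t in Set.Ioc (0 : ℝ) T, H1normSq (⇑e) lam (φ t) ≤
        ENNReal.ofReal (‖φ 0‖ ^ 2) := fun _ hT =>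
  le_add_self.trans_eq <| statement2_general e.orthonormal (fun j => (hlam_pos j).le)
    (fun t _ x hx => hLsym t x x hx hx) hε.le hφcont hφH2 hφderiv hT.le
end

section
/- Let H be a complex separable Hilbert space, (e_j)_{j≥1} an orthonormal basis, (λ_j)_{j≥1} a nondecreasing sequence of positive reals, L(t) a family of symmetric operators from H¹(Γ) to H, and ε ≥ 0. Suppose φ, ψ : [0,T] → H are continuous, φ(0) = ψ(0), and for every t ∈ (0,T), φ(t), ψ(t) ∈ H²(Γ), φ has derivative i·L(t)φ(t) − ε·Γφ(t) at t, and ψ has derivative i·L(t)ψ(t) − ε·Γψ(t) at t. Then φ(t) = ψ(t) for all t ∈ [0,T]. -/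
open scoped InnerProductSpace ENNReal
open MeasureTheory

/- The difference `u = φ - ψ` solves the same linear equation, and the derivative of `‖u‖²` is twice
the real part of the inner product of `u` with its derivative. The term `iL(t)u` contributes
nothing because `L(t)` is symmetric, and `-εΓu` contributes `-ε ‖u‖₁² ≤ 0`; hence `‖u‖` is
nonincreasing. The identity `‖u‖₁² = Re ⟪u, Γu⟫` also shows `H²(Γ) ⊆ H¹(Γ)`, so the symmetry of
`L(t)` applies to `u`. -/

section NormDecay

variable {𝕜 E : Type*} [RCLike 𝕜] [NormedAddCommGroup E] [InnerProductSpace 𝕜 E] [NormedSpace ℝ E]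

theorem hasDerivAt_norm_sq {u : ℝ → E} {u' : E} {t : ℝ} (hu : HasDerivAt u u' t) :
    HasDerivAt (fun s => ‖u s‖ ^ 2) (2 * RCLike.re (inner 𝕜 (u t) u')) t := by
  have h : HasDerivAt (fun s => RCLike.re (inner 𝕜 (u s) (u s)))
      (RCLike.re (inner 𝕜 (u t) u' + inner 𝕜 u' (u t))) t :=
    (RCLike.reCLM (K := 𝕜)).hasFDerivAt.comp_hasDerivAt t (hu.inner 𝕜 hu)
  simpa only [inner_self_eq_norm_sq, map_add, inner_re_symm u', ← two_mul] using h

theorem antitoneOn_norm_of_re_inner_deriv_nonpos {D : Set ℝ} (hD : Convex ℝ D) {u u' : ℝ → E}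
    (hu : ContinuousOn u D) (hu' : ∀ t ∈ interior D, HasDerivAt u (u' t) t)
    (hnonpos : ∀ t ∈ interior D, RCLike.re (inner 𝕜 (u t) (u' t)) ≤ 0) :
    AntitoneOn (fun t => ‖u t‖) D := by
  have hsq : AntitoneOn (fun t => ‖u t‖ ^ 2) D :=
    antitoneOn_of_hasDerivWithinAt_nonpos hD (hu.norm.pow 2)
      (fun t ht => (hasDerivAt_norm_sq (𝕜 := 𝕜) (hu' t ht)).hasDerivWithinAt)
      fun t ht => mul_nonpos_of_nonneg_of_nonpos zero_le_two (hnonpos t ht)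
  exact fun s hs t ht hst => le_of_sq_le_sq (hsq hs ht hst) (norm_nonneg _)

end NormDecay

theorem orthonormal_summable_smul_iff {𝕜 E ι : Type*} [RCLike 𝕜] [NormedAddCommGroup E]
    [InnerProductSpace 𝕜 E] [CompleteSpace E] {v : ι → E} (hv : Orthonormal 𝕜 v) (c : ι → 𝕜) :
    Summable (fun i => c i • v i) ↔ Summable fun i => ‖c i‖ ^ 2 := by
  simpa using hv.orthogonalFamily.summable_iff_norm_sq_summable c

section DissipativeEquation

variable {H : Type*} [NormedAddCommGroup H] [InnerProductSpace ℂ H]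

theorem re_inner_I_smul_eq_zero {x y : H} (h : ⟪y, x⟫_ℂ = ⟪x, y⟫_ℂ) :
    (⟪x, Complex.I • y⟫_ℂ).re = 0 := by
  have him : (⟪x, y⟫_ℂ).im = 0 := Complex.conj_eq_iff_im.1 (by rw [inner_conj_symm, h])
  rw [inner_smul_right, Complex.I_mul_re, him, neg_zero]

variable [CompleteSpace H] {e : ℕ → H} {lam : ℕ → ℝ} {x y : H}

theorem memH2_iff_summable (he : Orthonormal ℂ e) :
    MemH2 e lam x ↔ Summable fun j => ((lam j : ℂ) * ⟪e j, x⟫_ℂ) • e j := by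
  rw [orthonormal_summable_smul_iff he]
  have hterm : ∀ j, lam j ^ 2 * ‖⟪e j, x⟫_ℂ‖ ^ 2 = ‖(lam j : ℂ) * ⟪e j, x⟫_ℂ‖ ^ 2 := fun j => by
    rw [norm_mul, Complex.norm_real, mul_pow, Real.norm_eq_abs, sq_abs]
  simp only [MemH2, hterm]
  refine ⟨fun h => ?_, Summable.tsum_ofReal_ne_top⟩
  simpa only [ENNReal.toReal_ofReal (sq_nonneg _)] using ENNReal.summable_toReal h

namespace MemH2

theorem hasSum_gam (he : Orthonormal ℂ e) (hx : MemH2 e lam x) :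
    HasSum (fun j => ((lam j : ℂ) * ⟪e j, x⟫_ℂ) • e j) (Gam e lam x) :=
  ((memH2_iff_summable he).1 hx).hasSum

theorem hasSum_gam_sub (he : Orthonormal ℂ e) (hx : MemH2 e lam x) (hy : MemH2 e lam y) :
    HasSum (fun j => ((lam j : ℂ) * ⟪e j, x - y⟫_ℂ) • e j) (Gam e lam x - Gam e lam y) := by
  simpa only [inner_sub_right, mul_sub, sub_smul] using (hx.hasSum_gam he).sub (hy.hasSum_gam he)

theorem sub (he : Orthonormal ℂ e) (hx : MemH2 e lam x) (hy : MemH2 e lam y) :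
    MemH2 e lam (x - y) :=
  (memH2_iff_summable he).2 (hx.hasSum_gam_sub he hy).summable

theorem gam_sub (he : Orthonormal ℂ e) (hx : MemH2 e lam x) (hy : MemH2 e lam y) :
    Gam e lam (x - y) = Gam e lam x - Gam e lam y :=
  (hx.hasSum_gam_sub he hy).tsum_eq

theorem hasSum_re_inner_gam (he : Orthonormal ℂ e) (hx : MemH2 e lam x) :
    HasSum (fun j => lam j * ‖⟪e j, x⟫_ℂ‖ ^ 2) (⟪x, Gam e lam x⟫_ℂ).re := by
  have h := Complex.hasSum_re ((hx.hasSum_gam he).mapL (innerSL ℂ x))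
  have hterm (j : ℕ) :
      (⟪x, ((lam j : ℂ) * ⟪e j, x⟫_ℂ) • e j⟫_ℂ).re = lam j * ‖⟪e j, x⟫_ℂ‖ ^ 2 := by
    rw [inner_smul_right, mul_assoc, Complex.re_ofReal_mul, ← inner_conj_symm x (e j),
      Complex.mul_conj', ← Complex.ofReal_pow, Complex.ofReal_re]
  simpa only [innerSL_apply_apply, hterm] using h

theorem memH1_s3 (he : Orthonormal ℂ e) (hx : MemH2 e lam x) : MemH1 e lam x :=
  (hx.hasSum_re_inner_gam he).summable.tsum_ofReal_ne_top

theorem re_inner_gam_nonneg (he : Orthonormal ℂ e) (hlam : ∀ j, 0 ≤ lam j) (hx : MemH2 e lam x) :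
    0 ≤ (⟪x, Gam e lam x⟫_ℂ).re :=
  (hx.hasSum_re_inner_gam he).nonneg fun j => mul_nonneg (hlam j) (sq_nonneg _)

theorem re_inner_I_smul_sub_smul_gam_nonpos (he : Orthonormal ℂ e) (hlam : ∀ j, 0 ≤ lam j)
    (hx : MemH2 e lam x) (hy : ⟪y, x⟫_ℂ = ⟪x, y⟫_ℂ) {ε : ℝ} (hε : 0 ≤ ε) :
    (⟪x, Complex.I • y - ε • Gam e lam x⟫_ℂ).re ≤ 0 := by
  rw [inner_sub_right, Complex.sub_re, re_inner_I_smul_eq_zero hy, inner_smul_right_eq_smul,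
    Complex.smul_re, zero_sub, neg_nonpos]
  exact mul_nonneg hε (hx.re_inner_gam_nonneg he hlam)

end MemH2

theorem statement3_general (he : Orthonormal ℂ e) (hlam : ∀ j, 0 ≤ lam j) {a b ε : ℝ}
    (hε : 0 ≤ ε) {L : ℝ → H →ₗ[ℂ] H}
    (hL : ∀ t ∈ Set.Ioo a b, ∀ x y : H, MemH1 e lam x → MemH1 e lam y →
      ⟪L t x, y⟫_ℂ = ⟪x, L t y⟫_ℂ)
    {φ ψ : ℝ → H} (hφ : ContinuousOn φ (Set.Icc a b)) (hψ : ContinuousOn ψ (Set.Icc a b))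
    (hφH2 : ∀ t ∈ Set.Ioo a b, MemH2 e lam (φ t)) (hψH2 : ∀ t ∈ Set.Ioo a b, MemH2 e lam (ψ t))
    (hφ' : ∀ t ∈ Set.Ioo a b,
      HasDerivAt φ (Complex.I • L t (φ t) - ε • Gam e lam (φ t)) t)
    (hψ' : ∀ t ∈ Set.Ioo a b,
      HasDerivAt ψ (Complex.I • L t (ψ t) - ε • Gam e lam (ψ t)) t) :
    AntitoneOn (fun t => ‖φ t - ψ t‖) (Set.Icc a b) := by
  have hdH2 (t) (ht : t ∈ Set.Ioo a b) : MemH2 e lam (φ t - ψ t) :=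
    (hφH2 t ht).sub he (hψH2 t ht)
  have hd' (t) (ht : t ∈ Set.Ioo a b) : HasDerivAt (fun s => φ s - ψ s)
      (Complex.I • L t (φ t - ψ t) - ε • Gam e lam (φ t - ψ t)) t := by
    convert (hφ' t ht).fun_sub (hψ' t ht) using 1
    rw [map_sub, (hφH2 t ht).gam_sub he (hψH2 t ht), smul_sub, smul_sub, sub_sub_sub_comm]
  rw [← interior_Icc] at hdH2 hd' hL
  refine antitoneOn_norm_of_re_inner_deriv_nonpos (𝕜 := ℂ) (convex_Icc a b) (hφ.sub hψ) hd'
    fun t ht => ?_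
  have hdH1 := (hdH2 t ht).memH1_s3 he
  exact (hdH2 t ht).re_inner_I_smul_sub_smul_gam_nonpos he hlam (hL t ht _ _ hdH1 hdH1) hε

end DissipativeEquation

/-- uniqueness of solutions of `φ' = iL(t)φ − εΓφ`. -/
theorem statement3 {H : Type*} [NormedAddCommGroup H] [InnerProductSpace ℂ H]
    [CompleteSpace H] [TopologicalSpace.SeparableSpace H]
    (e : HilbertBasis ℕ ℂ H) (lam : ℕ → ℝ)
    (hlam_pos : ∀ j, 0 < lam j) (hlam_mono : Monotone lam)
    (L : ℝ → H →ₗ[ℂ] H)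
    (hLsym : ∀ t : ℝ, ∀ x y : H, MemH1 (⇑e) lam x → MemH1 (⇑e) lam y →
      ⟪L t x, y⟫_ℂ = ⟪x, L t y⟫_ℂ)
    (ε : ℝ) (hε : 0 ≤ ε) (T : ℝ) (φ ψ : ℝ → H)
    (hφcont : ContinuousOn φ (Set.Icc 0 T)) (hψcont : ContinuousOn ψ (Set.Icc 0 T))
    (h0 : φ 0 = ψ 0)
    (hφH2 : ∀ t ∈ Set.Ioo (0 : ℝ) T, MemH2 (⇑e) lam (φ t))
    (hψH2 : ∀ t ∈ Set.Ioo (0 : ℝ) T, MemH2 (⇑e) lam (ψ t))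
    (hφderiv : ∀ t ∈ Set.Ioo (0 : ℝ) T,
      HasDerivAt φ (Complex.I • L t (φ t) - ε • Gam (⇑e) lam (φ t)) t)
    (hψderiv : ∀ t ∈ Set.Ioo (0 : ℝ) T,
      HasDerivAt ψ (Complex.I • L t (ψ t) - ε • Gam (⇑e) lam (ψ t)) t) :
    ∀ t ∈ Set.Icc (0 : ℝ) T, φ t = ψ t := by
  have hanti := statement3_general e.orthonormal (fun j => (hlam_pos j).le) hε (fun t _ => hLsym t)
    hφcont hψcont hφH2 hψH2 hφderiv hψderiv
  intro t ht
  simpa [h0, sub_eq_zero] using hanti (Set.left_mem_Icc.2 (ht.1.trans ht.2)) ht ht.1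
end
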